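/- arXiv:0907.4299 — 3 statements merged into one kernel-verified Lean document; each statement's English description precedes it below -/
import Mathlib

section
/- The sequence (a_k) is given explicitly by: a_{6n} = a_{6n+1} = (−1)^n · 3^{−(3n+1)}, a_{6n+2} = (−1)^n · 2 · 3^{−(3n+2)}, a_{6n+3} = (−1)^n · 3^{−(3n+2)}, a_{6n+4} = (−1)^n · 3^{−(3n+3)}, and a_{6n+5} = 0, for all n ≥ 0. -/
/-!
Six steps of the recurrence act on the pair `(a_k, a_{k+1})` as multiplication by `-1/27`, because
the roots of `x² - x + 1/3` have modulus `3^{-1/2}` and argument `±π/6`. Hence `a_{6n}` and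
`a_{6n+1}` both equal `(-1/27)ⁿ / 3` (`reekerA_block`), and the other four residues follow by
unfolding the recurrence.
-/

/-- The sequence `a₀ = a₁ = 1/3`, `a_{k+2} = a_{k+1} - (1/3)·a_k`. -/
def reekerA : ℕ → ℚ
  | 0 => 1/3
  | 1 => 1/3
  | (k+2) => reekerA (k+1) - (1/3) * reekerA k

/-- Each block of six steps multiplies the consecutive pair `(a_{6n}, a_{6n+1})` by `-1/27`. -/
lemma reekerA_block (n : ℕ) :
    reekerA (6*n) = (-1)^n * ((27:ℚ)^n)⁻¹ / 3 ∧
    reekerA (6*n+1) = (-1)^n * ((27:ℚ)^n)⁻¹ / 3 := by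
  induction n with
  | zero => norm_num [reekerA]
  | succ n ih =>
    obtain ⟨h0, h1⟩ := ih
    rw [show 6*(n+1) = 6*n+6 by ring]
    simp only [reekerA, h0, h1, pow_succ, mul_inv]
    constructor <;> ring

lemma three_zpow_neg (n c : ℕ) :
    (3:ℚ) ^ (-(3*(n:ℤ)+(c:ℤ))) = ((27:ℚ)^n)⁻¹ * ((3:ℚ)^c)⁻¹ := by
  rw [zpow_neg, ← mul_inv, show (27:ℚ) = 3^3 by norm_num, ← pow_mul, ← pow_add]
  exact_mod_cast rfl

/-- The explicit formula for the sequence `aₖ`: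
`a_{6n} = a_{6n+1} = (−1)ⁿ·3^{−(3n+1)}`, `a_{6n+2} = (−1)ⁿ·2·3^{−(3n+2)}`,
`a_{6n+3} = (−1)ⁿ·3^{−(3n+2)}`, `a_{6n+4} = (−1)ⁿ·3^{−(3n+3)}`, `a_{6n+5} = 0`. -/
theorem stmt1 (n : ℕ) :
    reekerA (6*n) = (-1)^n * (3:ℚ) ^ (-(3*(n:ℤ)+1)) ∧
    reekerA (6*n+1) = (-1)^n * (3:ℚ) ^ (-(3*(n:ℤ)+1)) ∧
    reekerA (6*n+2) = (-1)^n * 2 * (3:ℚ) ^ (-(3*(n:ℤ)+2)) ∧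
    reekerA (6*n+3) = (-1)^n * (3:ℚ) ^ (-(3*(n:ℤ)+2)) ∧
    reekerA (6*n+4) = (-1)^n * (3:ℚ) ^ (-(3*(n:ℤ)+3)) ∧
    reekerA (6*n+5) = 0 := by
  obtain ⟨h0, h1⟩ := reekerA_block n
  have e1 := three_zpow_neg n 1
  have e2 := three_zpow_neg n 2
  have e3 := three_zpow_neg n 3
  push_cast at e1 e2 e3
  rw [e1, e2, e3]
  simp only [reekerA, h0, h1]
  refine ⟨?_, ?_, ?_, ?_, ?_, ?_⟩ <;> ring
end

section
/- In the ring of formal power series ℚ⟦x,y⟧ in two variables, one has the identity (3 − 3x + x²)·(3 − 3y + y²) · Σ_{m,n≥0} c_{m,n} x^m y^n = 3·(1 + (1−x)(1−y) + (1−x)²(1−y)²); that is, the c_{m,n} are exactly the coefficients of the power series expansion of 3·(1 + (1−x)(1−y) + (1−x)²(1−y)²) / ((3 − 3x + x²)(3 − 3y + y²)). -/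
/-- The sequence `a` extended by zero to negative indices. -/
def reekerA' (k : ℤ) : ℚ := if 0 ≤ k then reekerA k.toNat else 0

/-- `c_{m,n} = 9aₘaₙ − 9a_{m−1}aₙ − 9aₘa_{n−1} + 3a_{m−2}aₙ + 15a_{m−1}a_{n−1}
  + 3aₘa_{n−2} − 6a_{m−2}a_{n−1} − 6a_{m−1}a_{n−2} + 3a_{m−2}a_{n−2}`,
terms with negative indices being zero. -/
def reekerC (m n : ℕ) : ℚ :=
  9 * reekerA' m * reekerA' n - 9 * reekerA' (m-1) * reekerA' n
    - 9 * reekerA' m * reekerA' (n-1) + 3 * reekerA' (m-2) * reekerA' n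
    + 15 * reekerA' (m-1) * reekerA' (n-1) + 3 * reekerA' m * reekerA' (n-2)
    - 6 * reekerA' (m-2) * reekerA' (n-1) - 6 * reekerA' (m-1) * reekerA' (n-2)
    + 3 * reekerA' (m-2) * reekerA' (n-2)

/-- The two-variable power series `Σ_{m,n≥0} c_{m,n} xᵐ yⁿ`. -/
def reekerCSeries : MvPowerSeries (Fin 2) ℚ := fun d => reekerC (d 0) (d 1)

/-- The power series `Σ_{m,n≥0} f(m) g(n) xᵐ yⁿ`; values at negative indices are ignored. -/
def gridSeries (f g : ℤ → ℚ) : MvPowerSeries (Fin 2) ℚ := fun d => f (d 0) * g (d 1)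

theorem coeff_gridSeries (f g : ℤ → ℚ) (d : Fin 2 →₀ ℕ) :
    MvPowerSeries.coeff d (gridSeries f g) = f (d 0) * g (d 1) := rfl

theorem X_zero_mul (f g : ℤ → ℚ) (hf : f (-1) = 0) :
    MvPowerSeries.X 0 * gridSeries f g = gridSeries (fun k => f (k - 1)) g := by
  ext d
  rw [MvPowerSeries.X, MvPowerSeries.coeff_monomial_mul, coeff_gridSeries, coeff_gridSeries]
  by_cases h : d 0 = 0
  · simp [h, hf]
  · have h1 : 1 ≤ d 0 := Nat.one_le_iff_ne_zero.mpr h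
    simp [h1]

theorem X_one_mul (f g : ℤ → ℚ) (hg : g (-1) = 0) :
    MvPowerSeries.X 1 * gridSeries f g = gridSeries f (fun k => g (k - 1)) := by
  ext d
  rw [MvPowerSeries.X, MvPowerSeries.coeff_monomial_mul, coeff_gridSeries, coeff_gridSeries]
  by_cases h : d 1 = 0
  · simp [h, hg]
  · have h1 : 1 ≤ d 1 := Nat.one_le_iff_ne_zero.mpr h
    simp [h1]

theorem reekerA'_neg {k : ℤ} (hk : k < 0) : reekerA' k = 0 := by
  simp [reekerA', hk]

/-- The coefficient of `tⁿ` in `(3 - 3t + t²) Σ aₖ tᵏ` is that of the constant series `1`. -/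
theorem reekerA'_rec (n : ℕ) :
    3 * reekerA' n - 3 * reekerA' (n - 1) + reekerA' (n - 2) = if n = 0 then 1 else 0 := by
  match n with
  | 0 => norm_num [reekerA', reekerA]
  | 1 => norm_num [reekerA', reekerA]
  | k + 2 =>
    have h (j : ℕ) : reekerA' (j : ℤ) = reekerA j := by simp [reekerA']
    have e1 : ((k + 2 : ℕ) : ℤ) - 1 = (k + 1 : ℕ) := by push_cast; ring
    have e2 : ((k + 2 : ℕ) : ℤ) - 2 = k := by push_cast; ring
    rw [e1, e2, h, h, h, reekerA]
    simp
    ring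

theorem X_zero_sq_mul (g : ℤ → ℚ) :
    MvPowerSeries.X 0 ^ 2 * gridSeries reekerA' g = gridSeries (fun k => reekerA' (k - 2)) g := by
  rw [pow_two, mul_assoc, X_zero_mul _ _ (reekerA'_neg (by norm_num)),
    X_zero_mul (fun k => reekerA' (k - 1)) g (reekerA'_neg (by norm_num))]
  simp only [sub_sub]
  norm_num

theorem X_one_sq_mul (f : ℤ → ℚ) :
    MvPowerSeries.X 1 ^ 2 * gridSeries f reekerA' = gridSeries f (fun k => reekerA' (k - 2)) := by
  rw [pow_two, mul_assoc, X_one_mul _ _ (reekerA'_neg (by norm_num)),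
    X_one_mul f (fun k => reekerA' (k - 1)) (reekerA'_neg (by norm_num))]
  simp only [sub_sub]
  norm_num

theorem coeff_ofNat_mul (k : ℕ) [k.AtLeastTwo] (d : Fin 2 →₀ ℕ) (φ : MvPowerSeries (Fin 2) ℚ) :
    MvPowerSeries.coeff d ((ofNat(k) : MvPowerSeries (Fin 2) ℚ) * φ)
      = ofNat(k) * MvPowerSeries.coeff d φ := by
  rw [← map_ofNat (MvPowerSeries.C (σ := Fin 2) (R := ℚ)) k, MvPowerSeries.coeff_C_mul]

/-- `A(x) A(y)` is the inverse of `(3 - 3x + x²)(3 - 3y + y²)`. -/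
theorem denominator_mul_gridSeries :
    (3 - 3 * (MvPowerSeries.X 0 : MvPowerSeries (Fin 2) ℚ) + (MvPowerSeries.X 0) ^ 2)
      * ((3 - 3 * (MvPowerSeries.X 1 : MvPowerSeries (Fin 2) ℚ) + (MvPowerSeries.X 1) ^ 2)
      * gridSeries reekerA' reekerA') = 1 := by
  have hy : (3 - 3 * (MvPowerSeries.X 1 : MvPowerSeries (Fin 2) ℚ) + (MvPowerSeries.X 1) ^ 2)
      * gridSeries reekerA' reekerA' = gridSeries reekerA' (fun k => if k = 0 then 1 else 0) := by
    rw [add_mul, sub_mul, mul_assoc, X_one_sq_mul, X_one_mul _ _ (reekerA'_neg (by norm_num))]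
    ext d
    simp only [map_add, map_sub, coeff_ofNat_mul, coeff_gridSeries, Nat.cast_eq_zero]
    rw [← reekerA'_rec]
    ring
  rw [hy, add_mul, sub_mul, mul_assoc, X_zero_sq_mul,
    X_zero_mul _ _ (reekerA'_neg (by norm_num))]
  ext d
  simp only [map_add, map_sub, coeff_ofNat_mul, coeff_gridSeries, Nat.cast_eq_zero]
  have h0 := reekerA'_rec (d 0)
  have hd : d = 0 ↔ d 0 = 0 ∧ d 1 = 0 := by
    simp [Finsupp.ext_iff, Fin.forall_fin_two]
  rw [MvPowerSeries.coeff_one]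
  by_cases h1 : d 1 = 0
  · simp only [hd, h1, and_true, if_true, mul_one]
    exact h0
  · simp [hd, h1]

/-- The generating function of `c` is the numerator times `A(x) A(y)`. -/
theorem reekerCSeries_eq :
    reekerCSeries = 3 * (1 + (1 - MvPowerSeries.X 0) * (1 - MvPowerSeries.X 1)
      + (1 - MvPowerSeries.X 0) ^ 2 * (1 - MvPowerSeries.X 1) ^ 2)
      * gridSeries reekerA' reekerA' := by
  have hneg : reekerA' (-1) = 0 := reekerA'_neg (by norm_num)
  have expand (x y G : MvPowerSeries (Fin 2) ℚ) :
      3 * (1 + (1 - x) * (1 - y) + (1 - x) ^ 2 * (1 - y) ^ 2) * G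
        = 9 * G - 9 * (x * G) - 9 * (y * G) + 3 * (x ^ 2 * G) + 15 * (x * (y * G))
          + 3 * (y ^ 2 * G) - 6 * (y * (x ^ 2 * G)) - 6 * (x * (y ^ 2 * G))
          + 3 * (x ^ 2 * (y ^ 2 * G)) := by ring
  rw [expand]
  simp only [X_zero_sq_mul, X_one_sq_mul, X_zero_mul _ _ hneg, X_one_mul _ _ hneg]
  ext d
  simp only [map_add, map_sub, coeff_ofNat_mul, coeff_gridSeries]
  change reekerC (d 0) (d 1) = _
  rw [reekerC]
  ring

open MvPowerSeries in
/-- In `ℚ⟦x,y⟧` one has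
`(3 − 3x + x²)(3 − 3y + y²) · Σ c_{m,n} xᵐ yⁿ = 3(1 + (1−x)(1−y) + (1−x)²(1−y)²)`. -/
theorem stmt2 :
    (3 - 3 * (X 0 : MvPowerSeries (Fin 2) ℚ) + (X 0) ^ 2)
      * (3 - 3 * (X 1 : MvPowerSeries (Fin 2) ℚ) + (X 1) ^ 2)
      * reekerCSeries
    = 3 * (1 + (1 - X 0) * (1 - X 1) + (1 - X 0) ^ 2 * (1 - X 1) ^ 2) := by
  rw [reekerCSeries_eq]
  linear_combination (3 * (1 + (1 - X 0) * (1 - X 1) + (1 - X 0) ^ 2 * (1 - X 1) ^ 2))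
    * denominator_mul_gridSeries
end

section
/- For every integer k ≥ 2, the greatest common divisor gcd{ C(k,1), C(k,2), …, C(k,k−1) } of the inner binomial coefficients equals p if k = p^s is a power of a prime p (with s ≥ 1), and equals 1 otherwise. -/
/-- For `k ≥ 2`, `gcd{C(k,1), …, C(k,k−1)}` equals `p` if `k = p^s` is a prime power
(`s ≥ 1`), and equals `1` otherwise. -/
theorem stmt7 (k : ℕ) (hk : 2 ≤ k) :
    (∀ p s : ℕ, p.Prime → 1 ≤ s → k = p ^ s →
      Finset.gcd (Finset.Icc 1 (k - 1)) (Nat.choose k) = p) ∧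
    ((¬ ∃ p s : ℕ, p.Prime ∧ 1 ≤ s ∧ k = p ^ s) →
      Finset.gcd (Finset.Icc 1 (k - 1)) (Nat.choose k) = 1) := by
  refine ⟨fun p s hp hs hks => ?_, fun h => ?_⟩
  · have hpp : IsPrimePow k := (isPrimePow_nat_iff k).2 ⟨p, s, hp, hs, hks.symm⟩
    have hmin : k.minFac = p := by rw [hks, hp.pow_minFac (by omega)]
    rw [Choose.gcd_choose_eq_minFac_of_isPrimePow hpp, hmin]
  · refine Choose.gcd_choose_eq_one_of_not_isPrimePow hk fun hpp => h ?_
    obtain ⟨p, s, hp, hs, hks⟩ := (isPrimePow_nat_iff k).1 hpp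
    exact ⟨p, s, hp, hs, hks.symm⟩
end
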